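/- arXiv:2503.08260 — 3 statements merged into one kernel-verified Lean document; each statement's English description precedes it below -/
import Mathlib

section
/- Let S be a partial spread of PG(3,q) of size q²+1−x, where 0 ≤ x ≤ q²+1. Let P₀ be the set of holes of S and let P₂ be the set of planes of PG(3,q) containing no line of S. Then the pair (P₀, P₂) satisfies Property(x). -/
open scoped Classical

/-- Property(x) for a pair (P₀, P₂) of a set of points and a set of planes of PG(3,Q),
where `Q` is the field size. -/
def PropertyX (F : Type*) [Field F] (Q x : ℕ)
    (P0 : Set (Projectivization F (Fin 4 → F)))
    (P2 : Set (Submodule F (Fin 4 → F))) : Prop :=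
  -- (i) every plane contains exactly x or exactly Q+x points of P₀
  (∀ W : Submodule F (Fin 4 → F), Module.finrank F W = 3 →
      {p ∈ P0 | p.submodule ≤ W}.ncard = x ∨ {p ∈ P0 | p.submodule ≤ W}.ncard = Q + x) ∧
  -- (ii) P₂ is precisely the set of planes containing exactly Q+x points of P₀
  (∀ W : Submodule F (Fin 4 → F),
      W ∈ P2 ↔ Module.finrank F W = 3 ∧ {p ∈ P0 | p.submodule ≤ W}.ncard = Q + x) ∧
  -- (iii) every point lies on exactly x or exactly Q+x planes of P₂
  (∀ p : Projectivization F (Fin 4 → F),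
      {W ∈ P2 | p.submodule ≤ W}.ncard = x ∨ {W ∈ P2 | p.submodule ≤ W}.ncard = Q + x) ∧
  -- (iv) P₀ is precisely the set of points lying on exactly Q+x planes of P₂
  (∀ p : Projectivization F (Fin 4 → F),
      p ∈ P0 ↔ {W ∈ P2 | p.submodule ≤ W}.ncard = Q + x)

/-!
Lines of `PG(3, q)` are the case `k = 1` of `(k + 1)`-dimensional subspaces of a vector space of
dimension `2 (k + 1)`. An element of a partial spread meets a hyperplane `W` in codimension one
unless it lies in `W`, and `W` contains at most one element, since two of them already span the
whole space. As the elements are disjoint, subtracting their traces on `W` from the point count of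
`W` gives the number of holes in `W`. For the hyperplanes through a point one applies this count to
the dual space: taking annihilators turns a partial spread into a partial spread, and exchanges
points with hyperplanes, and holes with hyperplanes containing no element.
-/

section Incidence

open Module
open scoped LinearAlgebra.Projectivization

variable {K V : Type*} [DivisionRing K] [AddCommGroup V] [Module K V]

/-- A partial spread of `k`-dimensional subspaces, i.e. of `(k - 1)`-dimensional projective
subspaces: a set of such subspaces that pairwise intersect trivially. -/
structure IsPartialSpread (k : ℕ) (S : Set (Submodule K V)) : Prop where
  finrank_eq : ∀ L ∈ S, finrank K L = k
  pairwiseDisjoint : S.PairwiseDisjoint id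

/-- The points of projective space lying on no member of `S`. -/
def holes (S : Set (Submodule K V)) : Set (ℙ K V) :=
  {p | ∀ L ∈ S, ¬ p.submodule ≤ L}

/-- The hyperplanes containing no member of `S`, the notion dual to `holes`. -/
def freeHyperplanes (S : Set (Submodule K V)) : Set (Submodule K V) :=
  {W | finrank K W + 1 = finrank K V ∧ ∀ L ∈ S, ¬ L ≤ W}

/-- The analogue of `PropertyX` for points and hyperplanes of an arbitrary projective space, with
intersection numbers `a` and `b` in place of `x` and `q + x`. -/
structure IsTwoCharacterPair (a b : ℕ) (P : Set (ℙ K V)) (H : Set (Submodule K V)) : Prop where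
  ncard_points : ∀ W : Submodule K V, finrank K W + 1 = finrank K V →
    {p ∈ P | p.submodule ≤ W}.ncard = a ∨ {p ∈ P | p.submodule ≤ W}.ncard = b
  mem_hyperplanes_iff : ∀ W : Submodule K V,
    W ∈ H ↔ finrank K W + 1 = finrank K V ∧ {p ∈ P | p.submodule ≤ W}.ncard = b
  ncard_hyperplanes : ∀ p : ℙ K V,
    {W ∈ H | p.submodule ≤ W}.ncard = a ∨ {W ∈ H | p.submodule ≤ W}.ncard = b
  mem_points_iff : ∀ p : ℙ K V, p ∈ P ↔ {W ∈ H | p.submodule ≤ W}.ncard = b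

theorem IsTwoCharacterPair.of_ncard_eq_ite {a b : ℕ} {P : Set (ℙ K V)} {H : Set (Submodule K V)}
    (hab : a ≠ b) (hH : ∀ W ∈ H, finrank K W + 1 = finrank K V)
    (hpoints : ∀ W : Submodule K V, finrank K W + 1 = finrank K V →
      {p ∈ P | p.submodule ≤ W}.ncard = if W ∈ H then b else a)
    (hhyperplanes : ∀ p : ℙ K V, {W ∈ H | p.submodule ≤ W}.ncard = if p ∈ P then b else a) :
    IsTwoCharacterPair a b P H where
  ncard_points W hW := by rw [hpoints W hW]; split_ifs <;> simp
  mem_hyperplanes_iff W := by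
    refine ⟨fun h ↦ ⟨hH W h, by rw [hpoints W (hH W h), if_pos h]⟩, fun ⟨hW, hb⟩ ↦ ?_⟩
    by_contra h
    exact hab (by rw [← hb, hpoints W hW, if_neg h])
  ncard_hyperplanes p := by rw [hhyperplanes p]; split_ifs <;> simp
  mem_points_iff p := by simp [hhyperplanes p, hab]

theorem propertyX_iff_isTwoCharacterPair {F : Type*} [Field F] {q x : ℕ}
    {P : Set (ℙ F (Fin 4 → F))} {H : Set (Submodule F (Fin 4 → F))} :
    PropertyX F q x P H ↔ IsTwoCharacterPair x (q + x) P H := by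
  constructor
  · rintro ⟨hpoints, hH, hhyperplanes, hP⟩
    exact ⟨by simpa using hpoints, by simpa using hH, hhyperplanes, hP⟩
  · rintro ⟨hpoints, hH, hhyperplanes, hP⟩
    exact ⟨by simpa using hpoints, by simpa using hH, hhyperplanes, hP⟩

theorem disjoint_setOf_submodule_le {U U' : Submodule K V} (h : Disjoint U U') :
    Disjoint {p : ℙ K V | p.submodule ≤ U} {p | p.submodule ≤ U'} := by
  refine Set.disjoint_left.2 fun p hp hp' ↦ ?_
  have hbot : p.submodule = ⊥ := le_bot_iff.1 (h hp hp')
  have hfinrank := p.finrank_submodule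
  rw [hbot, finrank_bot] at hfinrank
  exact zero_ne_one hfinrank

theorem range_projectivization_map_subtype (U : Submodule K V) :
    Set.range (Projectivization.map U.subtype U.injective_subtype) =
      {p : ℙ K V | p.submodule ≤ U} := by
  ext p
  constructor
  · rintro ⟨p, rfl⟩
    induction p with | h v _ => simp [Projectivization.map_mk]
  · induction p with | h v hv =>
    intro h
    have hvU : v ∈ U := by simpa using h
    exact ⟨Projectivization.mk K ⟨v, hvU⟩ (by simpa using hv), by simp [Projectivization.map_mk]⟩

theorem finrank_inf_add_one_of_not_le [FiniteDimensional K V] {L W : Submodule K V}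
    (hW : finrank K W + 1 = finrank K V) (h : ¬ L ≤ W) :
    finrank K ↥(L ⊓ W) + 1 = finrank K L := by
  have hlt : finrank K W < finrank K ↥(L ⊔ W) :=
    Submodule.finrank_lt_finrank_of_lt (right_lt_sup.2 h)
  have hle : finrank K ↥(L ⊔ W) ≤ finrank K V := Submodule.finrank_le _
  have hsum := Submodule.finrank_sup_add_finrank_inf_eq L W
  lia

theorem IsPartialSpread.subsingleton_setOf_le [FiniteDimensional K V] {k : ℕ}
    {S : Set (Submodule K V)} (hS : IsPartialSpread k S) {W : Submodule K V}
    (hW : finrank K W < 2 * k) : {L ∈ S | L ≤ W}.Subsingleton := by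
  rintro L ⟨hL, hLW⟩ L' ⟨hL', hLW'⟩
  by_contra hne
  have hdisj : L ⊓ L' = ⊥ := (hS.pairwiseDisjoint hL hL' hne).eq_bot
  have hsum := Submodule.finrank_sup_add_finrank_inf_eq L L'
  rw [hdisj, finrank_bot, hS.finrank_eq L hL, hS.finrank_eq L' hL'] at hsum
  have hle : finrank K ↥(L ⊔ L') ≤ finrank K W := Submodule.finrank_mono (sup_le hLW hLW')
  lia

theorem IsPartialSpread.ncard_setOf_le [FiniteDimensional K V] {k : ℕ}
    {S : Set (Submodule K V)} (hS : IsPartialSpread k S) (hV : finrank K V = 2 * k)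
    {W : Submodule K V} (hW : finrank K W + 1 = finrank K V) :
    {L ∈ S | L ≤ W}.ncard = if W ∈ freeHyperplanes S then 0 else 1 := by
  split_ifs with hfree
  · have hempty : {L ∈ S | L ≤ W} = ∅ := Set.eq_empty_of_forall_notMem fun L hL ↦
      hfree.2 L hL.1 hL.2
    rw [hempty, Set.ncard_empty]
  · have hnonempty : {L ∈ S | L ≤ W}.Nonempty := by
      simpa [freeHyperplanes, hW, Set.Nonempty] using hfree
    obtain ⟨L, hL⟩ := (hS.subsingleton_setOf_le (by lia)).eq_empty_or_singleton.resolve_left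
      hnonempty.ne_empty
    rw [hL, Set.ncard_singleton]

end Incidence

section Counting

open Module Finset
open scoped LinearAlgebra.Projectivization

variable {F V : Type*} [Field F] [Finite F] [AddCommGroup V] [Module F V]

theorem ncard_setOf_submodule_le (U : Submodule F V) :
    {p : ℙ F V | p.submodule ≤ U}.ncard = ∑ i ∈ range (finrank F U), Nat.card F ^ i := by
  rw [← range_projectivization_map_subtype, ← Projectivization.card_of_finrank F U rfl,
    ← Nat.card_coe_set_eq, Nat.card_range_of_injective (Projectivization.map_injective _ _)]

variable [FiniteDimensional F V] {S : Set (Submodule F V)}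

theorem ncard_holes_add_finsum (hS : S.PairwiseDisjoint id) (W : Submodule F V) :
    {p ∈ holes S | p.submodule ≤ W}.ncard + ∑ᶠ L ∈ S, {p : ℙ F V | p.submodule ≤ L ⊓ W}.ncard =
      {p : ℙ F V | p.submodule ≤ W}.ncard := by
  have := Module.finite_of_finite F (M := V)
  have hcover : (⋃ L ∈ S, {p : ℙ F V | p.submodule ≤ L ⊓ W}) ⊆ {p | p.submodule ≤ W} :=
    Set.iUnion₂_subset fun L _ p (hp : p.submodule ≤ L ⊓ W) ↦
      show p.submodule ≤ W from hp.trans inf_le_right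
  have hholes : {p ∈ holes S | p.submodule ≤ W} =
      {p | p.submodule ≤ W} \ ⋃ L ∈ S, {p : ℙ F V | p.submodule ≤ L ⊓ W} := by
    ext p
    simp only [holes, Set.mem_ofPred_eq, Set.mem_sdiff, Set.mem_iUnion, le_inf_iff]
    grind
  have hdisj : S.PairwiseDisjoint fun L ↦ {p : ℙ F V | p.submodule ≤ L ⊓ W} :=
    fun L hL L' hL' hne ↦ disjoint_setOf_submodule_le
      ((hS hL hL' hne).mono inf_le_left inf_le_left)
  rw [← S.toFinite.ncard_biUnion (fun _ _ ↦ Set.toFinite _) hdisj, hholes,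
    Set.ncard_sdiff_add_ncard_of_subset hcover]

theorem IsPartialSpread.finsum_ncard_inf {k : ℕ} (hS : IsPartialSpread (k + 1) S)
    {W : Submodule F V} (hW : finrank F W + 1 = finrank F V) :
    ∑ᶠ L ∈ S, {p : ℙ F V | p.submodule ≤ L ⊓ W}.ncard =
      S.ncard * ∑ i ∈ range k, Nat.card F ^ i + {L ∈ S | L ≤ W}.ncard * Nat.card F ^ k := by
  have := Module.finite_of_finite F (M := V)
  have := Fintype.ofFinite (Submodule F V)
  have htrace : ∀ L ∈ S, {p : ℙ F V | p.submodule ≤ L ⊓ W}.ncard =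
      ∑ i ∈ range k, Nat.card F ^ i + if L ≤ W then Nat.card F ^ k else 0 := by
    intro L hL
    rw [ncard_setOf_submodule_le]
    split_ifs with h
    · rw [inf_eq_left.2 h, hS.finrank_eq L hL, sum_range_succ]
    · have hfinrank := finrank_inf_add_one_of_not_le hW h
      rw [hS.finrank_eq L hL, add_left_inj] at hfinrank
      rw [hfinrank, add_zero]
  rw [finsum_mem_congr rfl htrace, finsum_mem_eq_toFinset_sum, sum_add_distrib, sum_const,
    ← sum_filter, sum_const, Set.ncard_eq_toFinset_card', Set.ncard_eq_toFinset_card',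
    smul_eq_mul, smul_eq_mul]
  congr 3
  ext L
  simp

theorem geom_sum_two_mul_add_one {R : Type*} [CommSemiring R] (q : R) (k : ℕ) :
    ∑ i ∈ range (2 * k + 1), q ^ i = (q ^ (k + 1) + 1) * ∑ i ∈ range k, q ^ i + q ^ k := by
  rw [show 2 * k + 1 = (k + 1) + k by ring, sum_range_add, sum_range_succ]
  simp only [pow_add, ← mul_sum]
  ring

theorem IsPartialSpread.ncard_holes_in_hyperplane {k x : ℕ} (hS : IsPartialSpread (k + 1) S)
    (hV : finrank F V = 2 * (k + 1)) (hx : S.ncard + x = Nat.card F ^ (k + 1) + 1)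
    {W : Submodule F V} (hW : finrank F W + 1 = finrank F V) :
    {p ∈ holes S | p.submodule ≤ W}.ncard =
      if W ∈ freeHyperplanes S then Nat.card F ^ k + x * ∑ i ∈ range k, Nat.card F ^ i
      else x * ∑ i ∈ range k, Nat.card F ^ i := by
  have hcount := ncard_holes_add_finsum hS.pairwiseDisjoint W
  rw [hS.finsum_ncard_inf hW, hS.ncard_setOf_le hV hW, ncard_setOf_submodule_le,
    show finrank F W = 2 * k + 1 by lia, geom_sum_two_mul_add_one, ← hx, add_mul] at hcount
  split_ifs at hcount ⊢ <;> lia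

end Counting

section Duality

open Module Finset Submodule
open scoped LinearAlgebra.Projectivization

variable {F V : Type*} [Field F] [AddCommGroup V] [Module F V] [FiniteDimensional F V]
  {S : Set (Submodule F V)}

theorem IsPartialSpread.image_dualAnnihilator {k : ℕ} (hS : IsPartialSpread k S)
    (hV : finrank F V = 2 * k) : IsPartialSpread k (dualAnnihilator '' S) where
  finrank_eq := by
    rintro _ ⟨L, hL, rfl⟩
    have hsum := Subspace.finrank_add_finrank_dualAnnihilator_eq L
    rw [hS.finrank_eq L hL] at hsum
    lia
  pairwiseDisjoint := by
    rintro _ ⟨L, hL, rfl⟩ _ ⟨L', hL', rfl⟩ hne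
    have hdisj : Disjoint L L' := hS.pairwiseDisjoint hL hL' (ne_of_apply_ne _ hne)
    have hcompl : IsCompl L L' := (isCompl_iff_disjoint L L'
      (by rw [hS.finrank_eq L hL, hS.finrank_eq L' hL']; lia)).2 hdisj
    exact (Subspace.isCompl_dualAnnihilator hcompl).disjoint

theorem mem_holes_image_dualAnnihilator {p : ℙ F (Dual F V)} :
    p ∈ holes (dualAnnihilator '' S) ↔ p.submodule.dualCoannihilator ∈ freeHyperplanes S := by
  have hfinrank := Subspace.finrank_add_finrank_dualCoannihilator_eq p.submodule
  rw [p.finrank_submodule, add_comm] at hfinrank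
  simp only [holes, freeHyperplanes, Set.forall_mem_image, Set.mem_ofPred_eq, hfinrank, true_and,
    le_dualAnnihilator_iff_le_dualCoannihilator]

theorem dualAnnihilator_mem_freeHyperplanes_iff {p : ℙ F V} :
    p.submodule.dualAnnihilator ∈ freeHyperplanes (dualAnnihilator '' S) ↔ p ∈ holes S := by
  have hfinrank := Subspace.finrank_add_finrank_dualAnnihilator_eq p.submodule
  rw [p.finrank_submodule, add_comm, ← Subspace.dual_finrank_eq] at hfinrank
  simp only [holes, freeHyperplanes, Set.forall_mem_image, Set.mem_ofPred_eq, hfinrank, true_and,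
    Subspace.dualAnnihilator_le_dualAnnihilator_iff]

theorem ncard_freeHyperplanes_eq_ncard_dual_holes (S : Set (Submodule F V)) (U : Submodule F V) :
    {W ∈ freeHyperplanes S | U ≤ W}.ncard =
      {p ∈ holes (dualAnnihilator '' S) | p.submodule ≤ U.dualAnnihilator}.ncard := by
  refine (Set.BijOn.ncard_eq (f := fun p : ℙ F (Dual F V) ↦ p.submodule.dualCoannihilator)
    ⟨?mapsTo, ?injOn, ?surjOn⟩).symm
  case mapsTo =>
    exact fun p ⟨hp, hpU⟩ ↦ ⟨mem_holes_image_dualAnnihilator.1 hp,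
      le_dualAnnihilator_iff_le_dualCoannihilator.1 hpU⟩
  case injOn =>
    intro p _ p' _ h
    apply Projectivization.submodule_injective
    simpa [Subspace.dualCoannihilator_dualAnnihilator_eq] using congrArg dualAnnihilator h
  case surjOn =>
    rintro W ⟨hW, hUW⟩
    have hfinrank : finrank F W.dualAnnihilator = 1 := by
      have hsum := Subspace.finrank_add_finrank_dualAnnihilator_eq W
      have := hW.1
      lia
    have hdual : (Projectivization.mk'' _ hfinrank).submodule.dualCoannihilator = W := by
      rw [Projectivization.submodule_mk'', Subspace.dualAnnihilator_dualCoannihilator_eq]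
    refine ⟨Projectivization.mk'' _ hfinrank, ⟨?_, ?_⟩, hdual⟩
    · rwa [mem_holes_image_dualAnnihilator, hdual]
    · rw [Projectivization.submodule_mk'']
      exact dualAnnihilator_anti hUW

theorem IsPartialSpread.ncard_freeHyperplanes_through_point [Finite F] {k x : ℕ}
    (hS : IsPartialSpread (k + 1) S) (hV : finrank F V = 2 * (k + 1))
    (hx : S.ncard + x = Nat.card F ^ (k + 1) + 1) (p : ℙ F V) :
    {W ∈ freeHyperplanes S | p.submodule ≤ W}.ncard =
      if p ∈ holes S then Nat.card F ^ k + x * ∑ i ∈ range k, Nat.card F ^ i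
      else x * ∑ i ∈ range k, Nat.card F ^ i := by
  have hcard : (dualAnnihilator '' S).ncard = S.ncard :=
    Set.ncard_image_of_injective S fun _ _ ↦ Subspace.dualAnnihilator_inj.1
  have hfinrank := Subspace.finrank_add_finrank_dualAnnihilator_eq p.submodule
  rw [p.finrank_submodule, add_comm, ← Subspace.dual_finrank_eq] at hfinrank
  rw [ncard_freeHyperplanes_eq_ncard_dual_holes,
    (hS.image_dualAnnihilator hV).ncard_holes_in_hyperplane
      (Subspace.dual_finrank_eq.trans hV) (hcard ▸ hx) hfinrank]
  simp only [dualAnnihilator_mem_freeHyperplanes_iff]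

theorem stmt_3_general [Finite F] {k x : ℕ} (hS : IsPartialSpread (k + 1) S)
    (hV : finrank F V = 2 * (k + 1)) (hx : S.ncard + x = Nat.card F ^ (k + 1) + 1) :
    IsTwoCharacterPair (x * ∑ i ∈ range k, Nat.card F ^ i)
      (Nat.card F ^ k + x * ∑ i ∈ range k, Nat.card F ^ i) (holes S) (freeHyperplanes S) :=
  .of_ncard_eq_ite (by simp [Nat.card_pos.ne']) (fun _ h ↦ h.1)
    (fun _ ↦ hS.ncard_holes_in_hyperplane hV hx) (hS.ncard_freeHyperplanes_through_point hV hx)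

end Duality

/-- Let S be a partial spread of PG(3,q) of size q²+1−x. Then (holes of S,
planes containing no line of S) satisfies Property(x). -/
theorem stmt_3 (F : Type*) [Field F] [Fintype F] (q : ℕ) (hq : q = Fintype.card F)
    (x : ℕ) (hx : x ≤ q ^ 2 + 1)
    (S : Set (Submodule F (Fin 4 → F)))
    (hS_line : ∀ L ∈ S, Module.finrank F L = 2)
    (hS_disj : ∀ L ∈ S, ∀ L' ∈ S, L ≠ L' → L ⊓ L' = ⊥)
    (hS_card : S.ncard = q ^ 2 + 1 - x) :
    PropertyX F q x
      {p : Projectivization F (Fin 4 → F) | ∀ L ∈ S, ¬ p.submodule ≤ L}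
      {W : Submodule F (Fin 4 → F) | Module.finrank F W = 3 ∧ ∀ L ∈ S, ¬ L ≤ W} := by
  subst hq
  have hS : IsPartialSpread 2 S := ⟨hS_line, fun L hL L' hL' hne ↦
    disjoint_iff.2 (hS_disj L hL L' hL' hne)⟩
  rw [propertyX_iff_isTwoCharacterPair]
  simpa [holes, freeHyperplanes] using
    stmt_3_general (k := 1) (x := x) hS (by simp) (by rw [Nat.card_eq_fintype_card]; lia)
end

section
/- Let K be a finite field with |K| = Q, let m ≥ 1 be a natural number, and let P₀ be a set of points of PG(3,Q) with |P₀| = m(Q+1) such that every plane of PG(3,Q) contains exactly m or exactly m+Q points of P₀. Then the number of planes of PG(3,Q) containing exactly m+Q points of P₀ is exactly m(Q+1). -/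
open scoped Classical

/-!
Count the incident pairs (point of `P₀`, hyperplane) in two ways. By duality the hyperplanes
through a subspace of codimension `k` are the points of a projective space of dimension `k - 1`,
so there are `1 + q + ⋯ + q ^ (k - 1)` of them; this gives the number of hyperplanes and the number
of hyperplanes through a point. As the intersection numbers take only two values, the double count
is a linear equation for the number of hyperplanes attaining the larger one.
-/

open Module

section DoubleCounting

theorem sum_eq_card_mul_add_mul_card_filter {ι : Type*} (s : Finset ι) (f : ι → ℕ) {a b : ℕ}
    (hf : ∀ i ∈ s, f i = a ∨ f i = a + b) :
    ∑ i ∈ s, f i = s.card * a + b * (s.filter (f · = a + b)).card := by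
  have hval : ∀ i ∈ s, f i = a + b * if f i = a + b then 1 else 0 := by grind
  rw [Finset.sum_congr rfl hval, Finset.sum_add_distrib, Finset.sum_const, smul_eq_mul,
    ← Finset.mul_sum, ← Finset.card_filter]

theorem ncard_mul_add_mul_ncard_eq_of_two_intersection {α β : Type*} {r : α → β → Prop}
    {A : Set α} {B : Set β} (hA : A.Finite) (hB : B.Finite) {a b k : ℕ}
    (hdeg : ∀ x ∈ A, {y ∈ B | r x y}.ncard = k)
    (hint : ∀ y ∈ B, {x ∈ A | r x y}.ncard = a ∨ {x ∈ A | r x y}.ncard = a + b) :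
    B.ncard * a + b * {y ∈ B | {x ∈ A | r x y}.ncard = a + b}.ncard = A.ncard * k := by
  lift A to Finset α using hA
  lift B to Finset β using hB
  simp only [Finset.mem_coe, ← Finset.coe_filter, Set.ncard_coe_finset] at *
  rw [← sum_eq_card_mul_add_mul_card_filter B _ hint]
  exact (Finset.sum_card_bipartiteAbove_eq_sum_card_bipartiteBelow r).symm.trans
    (Finset.sum_const_nat hdeg)

end DoubleCounting

section Hyperplanes

variable {K V : Type*} [Field K] [AddCommGroup V] [Module K V]

theorem ncard_setOf_le_and_finrank_eq_one [Finite K] (A : Submodule K V) :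
    {L : Submodule K V | L ≤ A ∧ finrank K L = 1}.ncard =
      ∑ i ∈ Finset.range (finrank K A), Nat.card K ^ i := by
  let e : {L : Submodule K A // finrank K L = 1} ≃
      {L : Submodule K V // L ≤ A ∧ finrank K L = 1} :=
    (A.mapIic.toEquiv.subtypeEquiv fun L ↦ by
      rw [(A.equivSubtypeMap L).finrank_eq]
      rfl).trans
      (Equiv.subtypeSubtypeEquivSubtypeInter (· ≤ A) fun L ↦ finrank K L = 1)
  rw [← Projectivization.card_of_finrank K A rfl, ← Nat.card_coe_set_eq]
  exact (Nat.card_congr ((Projectivization.equivSubmodule K A).trans e)).symm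

theorem finrank_dualAnnihilator_eq_one_iff {n : ℕ} (hV : finrank K V = n + 1)
    (W : Submodule K V) : finrank K W.dualAnnihilator = 1 ↔ finrank K W = n := by
  have := FiniteDimensional.of_finrank_eq_succ hV
  have := Subspace.finrank_add_finrank_dualAnnihilator_eq W
  lia

theorem ncard_hyperplanes_ge [Finite K] {n k : ℕ} (hV : finrank K V = n + 1)
    {U : Submodule K V} (hU : finrank K U + k = n + 1) :
    {W : Submodule K V | finrank K W = n ∧ U ≤ W}.ncard =
      ∑ i ∈ Finset.range k, Nat.card K ^ i := by
  have := FiniteDimensional.of_finrank_eq_succ hV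
  have hk : finrank K U.dualAnnihilator = k := by
    have := Subspace.finrank_add_finrank_dualAnnihilator_eq U
    lia
  let e : {W : Submodule K V // finrank K W = n ∧ U ≤ W} ≃
      {L : Submodule K (Dual K V) // L ≤ U.dualAnnihilator ∧ finrank K L = 1} :=
    (Subspace.orderIsoFiniteDimensional.toEquiv.trans OrderDual.ofDual).subtypeEquiv fun W ↦ by
      change _ ↔ W.dualAnnihilator ≤ U.dualAnnihilator ∧ finrank K W.dualAnnihilator = 1
      rw [Subspace.dualAnnihilator_le_dualAnnihilator_iff,
        finrank_dualAnnihilator_eq_one_iff hV, and_comm]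
  rw [← hk, ← ncard_setOf_le_and_finrank_eq_one]
  exact Nat.card_congr e

theorem ncard_hyperplanes [Finite K] {n : ℕ} (hV : finrank K V = n + 1) :
    {W : Submodule K V | finrank K W = n}.ncard =
      ∑ i ∈ Finset.range (n + 1), Nat.card K ^ i := by
  simpa using ncard_hyperplanes_ge hV (U := ⊥) (k := n + 1) (by simp)

theorem ncard_hyperplanes_through_point [Finite K] {n : ℕ} (hV : finrank K V = n + 1)
    (p : Projectivization K V) :
    {W : Submodule K V | finrank K W = n ∧ p.submodule ≤ W}.ncard =
      ∑ i ∈ Finset.range n, Nat.card K ^ i :=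
  ncard_hyperplanes_ge hV (by rw [p.finrank_submodule, add_comm])

end Hyperplanes

section TwoIntersectionSets

variable {K V : Type*} [Field K] [Finite K] [AddCommGroup V] [Module K V]

theorem mul_add_mul_ncard_hyperplanes_of_two_intersection {n a b : ℕ} (hV : finrank K V = n + 1)
    (P : Set (Projectivization K V))
    (hP : ∀ W : Submodule K V, finrank K W = n →
      {p ∈ P | p.submodule ≤ W}.ncard = a ∨ {p ∈ P | p.submodule ≤ W}.ncard = a + b) :
    (∑ i ∈ Finset.range (n + 1), Nat.card K ^ i) * a +
        b * {W : Submodule K V | finrank K W = n ∧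
          {p ∈ P | p.submodule ≤ W}.ncard = a + b}.ncard =
      P.ncard * ∑ i ∈ Finset.range n, Nat.card K ^ i := by
  have := FiniteDimensional.of_finrank_eq_succ hV
  have := Module.finite_of_finite K (M := V)
  rw [← ncard_hyperplanes hV]
  exact ncard_mul_add_mul_ncard_eq_of_two_intersection P.toFinite (Set.toFinite _)
    (fun p _ ↦ ncard_hyperplanes_through_point hV p) hP

theorem stmt_13_general {n m : ℕ} (hV : finrank K V = n + 2) (P : Set (Projectivization K V))
    (hcard : P.ncard = m * (Nat.card K + 1))
    (hP : ∀ W : Submodule K V, finrank K W = n + 1 →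
      {p ∈ P | p.submodule ≤ W}.ncard = m ∨ {p ∈ P | p.submodule ≤ W}.ncard = m + Nat.card K) :
    {W : Submodule K V | finrank K W = n + 1 ∧
      {p ∈ P | p.submodule ≤ W}.ncard = m + Nat.card K}.ncard =
      m * ∑ i ∈ Finset.range n, Nat.card K ^ i := by
  have hcount := mul_add_mul_ncard_hyperplanes_of_two_intersection hV P hP
  rw [hcard, geom_sum_succ, geom_sum_succ] at hcount
  refine Nat.eq_of_mul_eq_mul_left (Nat.card_pos (α := K)) ?_
  linarith

end TwoIntersectionSets

/-- Let P₀ be a set of points of PG(3,Q) with |P₀| = m(Q+1), m ≥ 1, such that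
every plane contains exactly m or exactly m+Q points of P₀. Then the number of
planes containing exactly m+Q points of P₀ is exactly m(Q+1). -/
theorem stmt_13 (K : Type*) [Field K] [Fintype K] (Q : ℕ) (hQ : Q = Fintype.card K)
    (m : ℕ) (hm : 1 ≤ m)
    (P0 : Set (Projectivization K (Fin 4 → K)))
    (hcard : P0.ncard = m * (Q + 1))
    (hplanes : ∀ W : Submodule K (Fin 4 → K), Module.finrank K W = 3 →
      {p ∈ P0 | p.submodule ≤ W}.ncard = m ∨ {p ∈ P0 | p.submodule ≤ W}.ncard = m + Q) :
    {W : Submodule K (Fin 4 → K) | Module.finrank K W = 3 ∧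
      {p ∈ P0 | p.submodule ≤ W}.ncard = m + Q}.ncard = m * (Q + 1) := by
  subst hQ
  simp only [← Nat.card_eq_fintype_card] at hcard hplanes ⊢
  simpa [Finset.sum_range_succ, add_comm] using stmt_13_general (n := 2) (by simp) P0 hcard hplanes
end

section
/- Let K be a finite field with |K| = Q, let m ≥ 1 be a natural number, and let P₀ be a set of points of PG(3,Q) with |P₀| = m(Q+1) such that every plane of PG(3,Q) contains exactly m or exactly m+Q points of P₀. Let P₂ be the set of planes of PG(3,Q) containing exactly m+Q points of P₀. Then the pair (P₀, P₂) satisfies Property(m) in PG(3,Q). -/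
open scoped Classical

/-!
Fix a point `p` and count the pairs `(q, W)` with `q` in a point set `X`, and `W` a hyperplane
through `p` and `q`. In `PG(3, Q)` a point `q ≠ p` contributes the `Q + 1` planes through the
line `pq`, while `q = p` contributes all `Q² + Q + 1` planes through `p`, so the total is
`|X| (Q + 1)`, plus `Q²` if `p ∈ X`. Summing over the planes instead, it is `m (Q² + Q + 1) + b Q`,
where `b` is the number of planes through `p` with `m + Q` points of `X`. For `|X| = m (Q + 1)` this
gives `b = m + Q` if `p ∈ X` and `b = m` otherwise.
-/

section

open Finset Module
open scoped LinearAlgebra.Projectivization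

lemma isCoatom_Ici_iff {α : Type*} [PartialOrder α] [OrderTop α] {a : α} {b : Set.Ici a} :
    IsCoatom b ↔ IsCoatom (b : α) :=
  ⟨IsCoatom.of_isCoatom_coe_Ici, fun h ↦ h.Ici b.2⟩

lemma finrank_sup_submodule_of_ne {K V : Type*} [DivisionRing K] [AddCommGroup V] [Module K V]
    {p q : ℙ K V} (hpq : p ≠ q) :
    finrank K ↥(p.submodule ⊔ q.submodule) = 2 := by
  have isAtom_submodule (r : ℙ K V) : IsAtom r.submodule :=
    Submodule.isAtom_iff_finrank_eq_one.2 r.finrank_submodule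
  have hdisj : Disjoint p.submodule q.submodule :=
    (isAtom_submodule p).disjoint_of_ne (isAtom_submodule q)
      (Projectivization.submodule_injective.ne hpq)
  have h := Submodule.finrank_sup_add_finrank_inf_eq p.submodule q.submodule
  rwa [hdisj.eq_bot, finrank_bot, p.finrank_submodule, q.finrank_submodule] at h

variable {K V : Type*} [Field K] [AddCommGroup V] [Module K V]

section FiniteDimensional

variable [FiniteDimensional K V]

lemma isCoatom_iff_isAtom_dualAnnihilator {W : Submodule K V} :
    IsCoatom W ↔ IsAtom W.dualAnnihilator := by
  rw [← isAtom_dual_iff_isCoatom, ← isCoatom_dual_iff_isAtom]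
  exact (Subspace.orderIsoFiniteDimensional.isCoatom_iff W).symm

lemma isCoatom_iff_finrank_add_one_eq {W : Submodule K V} :
    IsCoatom W ↔ finrank K W + 1 = finrank K V := by
  have h := Subspace.finrank_add_finrank_dualAnnihilator_eq W
  rw [isCoatom_iff_isAtom_dualAnnihilator, Submodule.isAtom_iff_finrank_eq_one]
  lia

lemma card_isCoatom [Finite K] {d : ℕ} (hd : finrank K V = d) :
    Nat.card {W : Submodule K V // IsCoatom W} = ∑ i ∈ range d, Nat.card K ^ i := by
  have hyperplanesEquivDualPoints : {W : Submodule K V // IsCoatom W} ≃ ℙ K (Dual K V) :=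
    (Subspace.orderIsoFiniteDimensional.toEquiv.subtypeEquiv fun _ ↦
      isCoatom_iff_isAtom_dualAnnihilator.trans Submodule.isAtom_iff_finrank_eq_one).trans
      (Projectivization.equivSubmodule K (Dual K V)).symm
  rw [Nat.card_congr hyperplanesEquivDualPoints,
    Projectivization.card_of_finrank K (Dual K V) (Subspace.dual_finrank_eq.trans hd)]

lemma card_le_and_isCoatom [Finite K] (S : Submodule K V) {d : ℕ}
    (hd : finrank K S + d = finrank K V) :
    Nat.card {W : Submodule K V // S ≤ W ∧ IsCoatom W} = ∑ i ∈ range d, Nat.card K ^ i := by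
  have hquot : finrank K (V ⧸ S) = d := by
    have := S.finrank_quotient_add_finrank
    lia
  have quotientEquiv : {W : Submodule K (V ⧸ S) // IsCoatom W} ≃
      {W : Submodule K V // S ≤ W ∧ IsCoatom W} :=
    (S.comapMkQRelIso.toEquiv.subtypeEquiv fun W ↦
      (S.comapMkQRelIso.isCoatom_iff W).symm.trans isCoatom_Ici_iff).trans
      (Equiv.subtypeSubtypeEquivSubtypeInter (S ≤ ·) IsCoatom)
  rw [← card_isCoatom hquot, Nat.card_congr quotientEquiv]

end FiniteDimensional

section Counting

variable [Finite V]

/-- The hyperplanes of the projective space of `V` that contain the subspace `S`, a hyperplane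
being a maximal proper linear subspace of `V`. -/
noncomputable def hyperplanesThrough (S : Submodule K V) : Finset (Submodule K V) :=
  {W | S ≤ W ∧ IsCoatom W}.toFinite.toFinset

@[simp]
lemma mem_hyperplanesThrough {S W : Submodule K V} :
    W ∈ hyperplanesThrough S ↔ S ≤ W ∧ IsCoatom W := by
  simp [hyperplanesThrough]

lemma card_hyperplanesThrough [Finite K] (S : Submodule K V) {d : ℕ}
    (hd : finrank K S + d = finrank K V) :
    #(hyperplanesThrough S) = ∑ i ∈ range d, Nat.card K ^ i := by
  rw [← card_le_and_isCoatom S hd, hyperplanesThrough, ← Set.ncard_eq_toFinset_card]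
  rfl

lemma filter_hyperplanesThrough (S T : Submodule K V) :
    {W ∈ hyperplanesThrough S | T ≤ W} = hyperplanesThrough (S ⊔ T) := by
  ext W
  simp [and_assoc, and_comm]

lemma card_hyperplanesThrough_sup_submodule [Finite K] {n : ℕ} (hn : finrank K V = n + 2)
    (p q : ℙ K V) :
    #(hyperplanesThrough (p.submodule ⊔ q.submodule)) =
      ∑ i ∈ range n, Nat.card K ^ i + if q = p then Nat.card K ^ n else 0 := by
  split_ifs with hqp
  · rw [hqp, sup_idem, card_hyperplanesThrough p.submodule (d := n + 1), sum_range_succ]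
    rw [p.finrank_submodule, hn]
    lia
  · rw [card_hyperplanesThrough _ (d := n), add_zero]
    rw [finrank_sup_submodule_of_ne (Ne.symm hqp), hn, add_comm]

lemma sum_card_filter_le_hyperplanesThrough [Finite K] {n : ℕ} (hn : finrank K V = n + 2)
    (X : Finset (ℙ K V)) (p : ℙ K V) :
    ∑ W ∈ hyperplanesThrough p.submodule, #{q ∈ X | q.submodule ≤ W} =
      #X * ∑ i ∈ range n, Nat.card K ^ i + if p ∈ X then Nat.card K ^ n else 0 :=
  calc
    _ = ∑ q ∈ X, #{W ∈ hyperplanesThrough p.submodule | q.submodule ≤ W} :=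
      sum_card_bipartiteAbove_eq_sum_card_bipartiteBelow fun W (q : ℙ K V) ↦ q.submodule ≤ W
    _ = ∑ q ∈ X, (∑ i ∈ range n, Nat.card K ^ i + if q = p then Nat.card K ^ n else 0) := by
      simp only [filter_hyperplanesThrough, card_hyperplanesThrough_sup_submodule hn]
    _ = _ := by
      rw [sum_add_distrib, sum_const, smul_eq_mul, sum_ite_eq']

lemma card_filter_hyperplanesThrough_mul_add [Finite K] {n a s : ℕ} (hn : finrank K V = n + 2)
    {X : Finset (ℙ K V)}
    (hX : ∀ W, IsCoatom W → #{q ∈ X | q.submodule ≤ W} = a ∨ #{q ∈ X | q.submodule ≤ W} = a + s)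
    (p : ℙ K V) :
    #{W ∈ hyperplanesThrough p.submodule | #{q ∈ X | q.submodule ≤ W} = a + s} * s +
        a * ∑ i ∈ range (n + 1), Nat.card K ^ i =
      #X * ∑ i ∈ range n, Nat.card K ^ i + if p ∈ X then Nat.card K ^ n else 0 := by
  have hsection : ∀ W ∈ hyperplanesThrough p.submodule, #{q ∈ X | q.submodule ≤ W} =
      a + if #{q ∈ X | q.submodule ≤ W} = a + s then s else 0 := by
    intro W hW
    have := hX W (mem_hyperplanesThrough.1 hW).2
    grind
  have hthrough : #(hyperplanesThrough p.submodule) = ∑ i ∈ range (n + 1), Nat.card K ^ i :=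
    card_hyperplanesThrough _ (by rw [p.finrank_submodule, hn]; lia)
  rw [← sum_card_filter_le_hyperplanesThrough hn, sum_congr rfl hsection, sum_add_distrib,
    sum_const, hthrough, ← sum_filter, sum_const, smul_eq_mul, smul_eq_mul, add_comm, mul_comm a]

lemma card_filter_hyperplanesThrough_of_finrank_eq_four [Finite K] {m : ℕ}
    (hV : finrank K V = 4) {X : Finset (ℙ K V)} (hcard : #X = m * (Nat.card K + 1))
    (hX : ∀ W, IsCoatom W →
      #{q ∈ X | q.submodule ≤ W} = m ∨ #{q ∈ X | q.submodule ≤ W} = m + Nat.card K)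
    (p : ℙ K V) :
    #{W ∈ hyperplanesThrough p.submodule | #{q ∈ X | q.submodule ≤ W} = m + Nat.card K} =
      if p ∈ X then m + Nat.card K else m := by
  have h := card_filter_hyperplanesThrough_mul_add hV hX p
  simp only [hcard, sum_range_succ, range_zero, sum_empty] at h
  have hQ : 0 < Nat.card K := Nat.card_pos
  refine Nat.eq_of_mul_eq_mul_right hQ ?_
  split_ifs at h ⊢ <;> linarith

lemma ncard_planes_through_of_finrank_eq_four [Finite K] {m : ℕ} (hV : finrank K V = 4)
    {P0 : Set (ℙ K V)} (hcard : P0.ncard = m * (Nat.card K + 1))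
    (hplanes : ∀ W : Submodule K V, finrank K W = 3 →
      {q ∈ P0 | q.submodule ≤ W}.ncard = m ∨ {q ∈ P0 | q.submodule ≤ W}.ncard = m + Nat.card K)
    (p : ℙ K V) :
    {W ∈ {W : Submodule K V | finrank K W = 3 ∧
        {q ∈ P0 | q.submodule ≤ W}.ncard = m + Nat.card K} | p.submodule ≤ W}.ncard =
      if p ∈ P0 then m + Nat.card K else m := by
  have isCoatom_iff_finrank_eq_three (W : Submodule K V) : IsCoatom W ↔ finrank K W = 3 := by
    rw [isCoatom_iff_finrank_add_one_eq, hV]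
    lia
  lift P0 to Finset (ℙ K V) using P0.toFinite
  simp only [mem_coe, ← coe_filter, Set.ncard_coe_finset, ← isCoatom_iff_finrank_eq_three]
    at hcard hplanes ⊢
  rw [← card_filter_hyperplanesThrough_of_finrank_eq_four hV hcard hplanes p,
    ← Set.ncard_coe_finset]
  congr 1
  ext W
  grind [mem_hyperplanesThrough]

end Counting

end

/-- Let P₀ be a set of points of PG(3,Q) with |P₀| = m(Q+1), m ≥ 1, such that
every plane contains exactly m or exactly m+Q points of P₀, and let P₂ be the
set of planes containing exactly m+Q points of P₀. Then (P₀, P₂) satisfies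
Property(m) in PG(3,Q). -/
theorem stmt_15 (K : Type*) [Field K] [Fintype K] (Q : ℕ) (hQ : Q = Fintype.card K)
    (m : ℕ) (hm : 1 ≤ m)
    (P0 : Set (Projectivization K (Fin 4 → K)))
    (hcard : P0.ncard = m * (Q + 1))
    (hplanes : ∀ W : Submodule K (Fin 4 → K), Module.finrank K W = 3 →
      {p ∈ P0 | p.submodule ≤ W}.ncard = m ∨ {p ∈ P0 | p.submodule ≤ W}.ncard = m + Q) :
    PropertyX K Q m P0
      {W : Submodule K (Fin 4 → K) | Module.finrank K W = 3 ∧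
        {p ∈ P0 | p.submodule ≤ W}.ncard = m + Q} := by
  have hthrough (p : Projectivization K (Fin 4 → K)) :
      {W ∈ {W : Submodule K (Fin 4 → K) | Module.finrank K W = 3 ∧
          {q ∈ P0 | q.submodule ≤ W}.ncard = m + Q} | p.submodule ≤ W}.ncard =
        if p ∈ P0 then Q + m else m := by
    rw [← Nat.card_eq_fintype_card] at hQ
    subst hQ
    rw [ncard_planes_through_of_finrank_eq_four (by simp) hcard hplanes p, add_comm]
  have hQpos : 0 < Q := hQ ▸ Fintype.card_pos
  simp only [add_comm m Q] at hplanes hthrough ⊢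
  refine ⟨hplanes, fun W ↦ Iff.rfl, fun p ↦ ?_, fun p ↦ ?_⟩
  · rw [hthrough p]
    exact (ite_eq_or_eq _ _ _).symm
  · rw [hthrough p]
    split_ifs with hp <;> simp [hp, hQpos.ne']
end
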